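/- Consider a smooth solution of the Bianchi I Einstein–Vlasov system on [t₀,∞) with expanding initial data (H(t₀) < 0) and f₀ not identically zero. There exists ε₀ > 0 and a constant C > 0 such that if F(t₀) ≤ ε₀ and P(t₀) ≤ ε₀, then every generalized Kasner exponent converges to 1/3 at rate t^{-1}: for every t large and every eigenvalue λ of the matrix g(t)⁻¹ k(t), the quotient p = λ / H(t) satisfies |p - 1/3| ≤ C t^{-1}. -/

import Mathlib

/-!
Isotropization of expanding Bianchi I solutions with collisionless matter.

Write `V = √det g`, `W = V' = -V H`, `E = V ρ`, `τ = V tr S`, `D = V² tr (g⁻¹σg⁻¹σ)` and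
`u = 1 + t - t₀`. An eigenvalue `λ` of `g⁻¹k` satisfies `|λ - H/3| ≤ √D / V`, so that
`|λ/H - 1/3| ≤ √D / W`. It suffices to show that `W` grows at least linearly while `D` is bounded,
which holds for arbitrary expanding initial data.

* `W' = 12πE - 4πτ ≥ 8πE ≥ 8πm ∫ f₀ > 0`, so `W ≥ c u` and `V ≥ c u²` (`growth_lower`).
* `(√D)' ≤ 8πτ`, since the shear is driven only by the stress tensor. As
  `τ ≤ (∫ f₀ / m) sup g^{ab}p_ap_b` over the support of `f₀`, everything reduces to integrable decay
  of the momenta.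
* A lower bound `-V k ≥ μ(t) g` propagates as soon as `μ' ≤ 4π(E - τ)`: in the equation for
  `-V k - μ g`, tested on a fixed vector, the terms quadratic in `k` complete to a square
  (`exists_hasDeriv_quad`, `quad_ge_of_initial`). It gives `(g^{ab}p_ap_b)' ≤ -(2μ/V) g^{ab}p_ap_b`.

The last fact is applied twice. With `μ` constant and negative, integrability of `1/V` shows that the
momenta remain bounded (`momenta_bounded`), hence `E - τ ≥ b/(4π) > 0` and `V ≤ B u²`. With `μ` growing
at the rate `b`, the momenta decay: `g^{ab}p_ap_b ≤ R u^{-α}` for some `0 < α ≤ 1/2`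
(`momenta_decay`). Then `√D = O(u^{1-α})` (`shear_sublinear`), which makes `√D / V` integrable and
improves the decay to the dust rate `g^{ab}p_ap_b = O(u^{-4/3})` (`momenta_sharp`). Now `τ` is
integrable and `D` is bounded (`shear_bounded`).
-/

open Matrix MeasureTheory

attribute [local instance] Matrix.normedAddCommGroup Matrix.normedSpace

/-- The energy density `ρ` of collisionless matter with distribution function `f₀`
(in covariant momentum components) on a spatial metric `g`. -/
noncomputable def energyDensity (m : ℝ) (f₀ : (Fin 3 → ℝ) → ℝ)
    (g : Matrix (Fin 3) (Fin 3) ℝ) : ℝ :=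
  ∫ p : Fin 3 → ℝ, f₀ p * Real.sqrt (m ^ 2 + p ⬝ᵥ g⁻¹.mulVec p) / Real.sqrt g.det

/-- The spatial stress tensor `S_{ab}` (with lower indices). -/
noncomputable def stress (m : ℝ) (f₀ : (Fin 3 → ℝ) → ℝ)
    (g : Matrix (Fin 3) (Fin 3) ℝ) : Matrix (Fin 3) (Fin 3) ℝ :=
  Matrix.of fun a b => ∫ p : Fin 3 → ℝ,
    f₀ p * p a * p b / (Real.sqrt (m ^ 2 + p ⬝ᵥ g⁻¹.mulVec p) * Real.sqrt g.det)

/-- The mean curvature `H = tr (g⁻¹ k)`. -/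
noncomputable def meanCurv (g k : Matrix (Fin 3) (Fin 3) ℝ) : ℝ := (g⁻¹ * k).trace

/-- The shear `σ = k - (H/3) g`, the trace-free part of the second fundamental form. -/
noncomputable def shear (g k : Matrix (Fin 3) (Fin 3) ℝ) : Matrix (Fin 3) (Fin 3) ℝ :=
  k - (meanCurv g k / 3) • g

/-- The anisotropy `F = σ_{ab} σ^{ab} / H²`. -/
noncomputable def anisotropy (g k : Matrix (Fin 3) (Fin 3) ℝ) : ℝ :=
  (g⁻¹ * shear g k * g⁻¹ * shear g k).trace / meanCurv g k ^ 2

/-- `P`, the supremum of the absolute values of the momenta on the support of `f₀`. -/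
noncomputable def momentumSup (f₀ : (Fin 3 → ℝ) → ℝ)
    (g : Matrix (Fin 3) (Fin 3) ℝ) : ℝ :=
  sSup ((fun p => Real.sqrt (p ⬝ᵥ g⁻¹.mulVec p)) '' {p | f₀ p ≠ 0})

/-- A smooth solution of the Bianchi I Einstein–Vlasov system on `[t₀, ∞)`
(Gaussian time, zero cosmological constant, particle mass `m > 0`). -/
structure BianchiIVlasov (t₀ m : ℝ) (g k : ℝ → Matrix (Fin 3) (Fin 3) ℝ)
    (f₀ : (Fin 3 → ℝ) → ℝ) : Prop where
  m_pos : 0 < m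
  g_smooth : ContDiffOn ℝ (⊤ : ℕ∞) g (Set.Ici t₀)
  k_smooth : ContDiffOn ℝ (⊤ : ℕ∞) k (Set.Ici t₀)
  f₀_smooth : ContDiff ℝ (⊤ : ℕ∞) f₀
  f₀_nonneg : ∀ p, 0 ≤ f₀ p
  f₀_cpt : HasCompactSupport f₀
  g_posdef : ∀ t ≥ t₀, (g t).PosDef
  g_symm : ∀ t ≥ t₀, (g t).IsSymm
  k_symm : ∀ t ≥ t₀, (k t).IsSymm
  evol_g : ∀ t ≥ t₀, HasDerivWithinAt g (-(2 : ℝ) • k t) (Set.Ici t₀) t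
  evol_k : ∀ t ≥ t₀, HasDerivWithinAt k
    (meanCurv (g t) (k t) • k t - (2 : ℝ) • (k t * (g t)⁻¹ * k t)
      - (8 * Real.pi) • (stress m f₀ (g t)
          - (((g t)⁻¹ * stress m f₀ (g t)).trace / 2) • g t)
      - (4 * Real.pi * energyDensity m f₀ (g t)) • g t) (Set.Ici t₀) t
  constraint : ∀ t ≥ t₀,
    meanCurv (g t) (k t) ^ 2 - ((g t)⁻¹ * k t * (g t)⁻¹ * k t).trace
      = 16 * Real.pi * energyDensity m f₀ (g t)

/-! ### Quadratic forms and traces -/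

/-- Real `3 × 3` matrices. -/
abbrev M3 := Matrix (Fin 3) (Fin 3) ℝ

/-- A positive semidefinite matrix is a Gram matrix. -/
theorem exists_gram {G : M3} (hG : G.PosSemidef) : ∃ B : M3, G = Bᵀ * B := by
  open scoped MatrixOrder in
  obtain ⟨B, hB⟩ := CStarAlgebra.nonneg_iff_eq_star_mul_self.mp hG.nonneg
  refine ⟨B, ?_⟩
  rw [hB, Matrix.star_eq_conjTranspose, Matrix.conjTranspose_eq_transpose_of_trivial]

/-- With `G = BᵀB` the trace is the squared Frobenius norm of the matrix `B X Bᵀ`. -/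
theorem trace_sq_nonneg {G X : M3} (hG : G.PosSemidef) (hX : X.IsSymm) :
    0 ≤ (G * X * G * X).trace := by
  obtain ⟨B, rfl⟩ := exists_gram hG
  have h : (Bᵀ * B * X * (Bᵀ * B) * X).trace = ((B * X * Bᵀ)ᵀ * (B * X * Bᵀ)).trace := by
    rw [Matrix.transpose_mul, Matrix.transpose_mul, Matrix.transpose_transpose, hX.eq]
    rw [show Bᵀ * B * X * (Bᵀ * B) * X = Bᵀ * (B * X * (Bᵀ * B) * X) by
      simp only [Matrix.mul_assoc], Matrix.trace_mul_comm]
    simp only [Matrix.mul_assoc]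
  rw [h, Matrix.trace]
  refine Finset.sum_nonneg fun i _ => ?_
  rw [Matrix.diag_apply, Matrix.mul_apply]
  exact Finset.sum_nonneg fun j _ => mul_self_nonneg _

theorem trace_mul_vecMulVec (A : M3) (u v : Fin 3 → ℝ) :
    (A * vecMulVec u v).trace = v ⬝ᵥ A *ᵥ u := by
  simp only [Matrix.trace, Matrix.diag_apply, Matrix.mul_apply, vecMulVec_apply, dotProduct,
    mulVec, Finset.mul_sum]
  refine Finset.sum_congr rfl fun i _ => Finset.sum_congr rfl fun j _ => by ring

theorem dot_symm {A : M3} (hA : A.IsSymm) (x y : Fin 3 → ℝ) : x ⬝ᵥ A *ᵥ y = y ⬝ᵥ A *ᵥ x := by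
  rw [dotProduct_mulVec, ← mulVec_transpose, hA.eq, dotProduct_comm]

theorem PosDef_isSymm {g : M3} (hg : g.PosDef) : g.IsSymm := by
  have := hg.1
  rwa [Matrix.IsHermitian, Matrix.conjTranspose_eq_transpose_of_trivial] at this

/-- Cauchy–Schwarz: the operator norm of `g⁻¹k` with respect to `g` is at most its
Hilbert–Schmidt norm. With `a = g(v,v)` and `b = k(v,v)`, it amounts to nonnegativity of the squared
`g`-norm of the symmetric matrix `a² k - b (gv)(gv)ᵀ`. -/
theorem quad_sq_le {g k : M3} (hg : g.PosDef) (hk : k.IsSymm) (v : Fin 3 → ℝ) :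
    (v ⬝ᵥ k *ᵥ v) ^ 2 ≤ (g⁻¹ * k * g⁻¹ * k).trace * (v ⬝ᵥ g *ᵥ v) ^ 2 := by
  by_cases hv : v = 0
  · simp [hv]
  have hd : IsUnit g.det := (Matrix.isUnit_iff_isUnit_det _).1 hg.isUnit
  have hpos : 0 < v ⬝ᵥ g *ᵥ v := by simpa using hg.dotProduct_mulVec_pos hv
  set a := v ⬝ᵥ g *ᵥ v
  set b := v ⬝ᵥ k *ᵥ v
  have hgi : g⁻¹ * vecMulVec (g *ᵥ v) (g *ᵥ v) = vecMulVec v (g *ᵥ v) := by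
    rw [mul_vecMulVec, mulVec_mulVec, Matrix.nonsing_inv_mul _ hd, one_mulVec]
  have hX : (a ^ 2 • k - b • vecMulVec (g *ᵥ v) (g *ᵥ v)).IsSymm := by
    unfold Matrix.IsSymm
    rw [transpose_sub, transpose_smul, transpose_smul, hk.eq, transpose_vecMulVec]
  have h := trace_sq_nonneg hg.inv.posSemidef hX
  have e : (g⁻¹ * (a ^ 2 • k - b • vecMulVec (g *ᵥ v) (g *ᵥ v)) * g⁻¹ *
      (a ^ 2 • k - b • vecMulVec (g *ᵥ v) (g *ᵥ v))).trace
      = a ^ 4 * (g⁻¹ * k * g⁻¹ * k).trace - a ^ 2 * b ^ 2 := by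
    have c1 : (g⁻¹ * k * vecMulVec v (g *ᵥ v)).trace = b := by
      rw [trace_mul_vecMulVec, ← mulVec_mulVec, dot_symm (PosDef_isSymm hg.inv), mulVec_mulVec,
        Matrix.nonsing_inv_mul _ hd, one_mulVec, dotProduct_comm]
    have c2 : (vecMulVec v (g *ᵥ v) * (g⁻¹ * k)).trace = b := by
      rw [Matrix.trace_mul_comm, c1]
    have c3 : (vecMulVec v (g *ᵥ v) * vecMulVec v (g *ᵥ v)).trace = a ^ 2 := by
      rw [trace_mul_vecMulVec, vecMulVec_mulVec]
      simp only [dotProduct_smul, MulOpposite.smul_eq_mul_unop, MulOpposite.unop_op]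
      rw [dotProduct_comm (g *ᵥ v) v, sq]
    simp only [Matrix.mul_sub, Matrix.sub_mul, Matrix.mul_smul, Matrix.smul_mul, Matrix.trace_sub,
      Matrix.trace_smul, hgi, smul_eq_mul, Matrix.mul_assoc]
    simp only [Matrix.mul_assoc] at c1 c2 c3
    rw [c1, c2, c3]
    ring
  rw [e] at h
  have : a ^ 2 * b ^ 2 ≤ a ^ 2 * ((g⁻¹ * k * g⁻¹ * k).trace * a ^ 2) := by linarith
  exact le_of_mul_le_mul_left this (by positivity)

/-! ### Matter integrals -/

/-- The length squared `g^{ab} p_a p_b` of a covector. -/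
noncomputable def nsq (g : M3) (p : Fin 3 → ℝ) : ℝ := p ⬝ᵥ g⁻¹ *ᵥ p

/-- The particle energy `(m² + g^{ab} p_a p_b)^{1/2}`. -/
noncomputable def pe (m : ℝ) (g : M3) (p : Fin 3 → ℝ) : ℝ := √(m ^ 2 + nsq g p)

theorem nsq_nonneg {g : M3} (hg : g.PosDef) (p : Fin 3 → ℝ) : 0 ≤ nsq g p := by
  simpa [nsq] using hg.inv.posSemidef.dotProduct_mulVec_nonneg p

theorem pe_ge {m : ℝ} {g : M3} (hg : g.PosDef) (p : Fin 3 → ℝ) : m ≤ pe m g p :=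
  Real.le_sqrt_of_sq_le (by linarith [nsq_nonneg hg p])

theorem continuous_quad (A : M3) : Continuous fun p : Fin 3 → ℝ => p ⬝ᵥ A *ᵥ p := by
  fun_prop

theorem continuous_nsq (g : M3) : Continuous (nsq g) := continuous_quad _

theorem continuous_pe (m : ℝ) (g : M3) : Continuous (pe m g) :=
  Real.continuous_sqrt.comp (continuous_const.add (continuous_quad _))

theorem integrable_mul {f φ : (Fin 3 → ℝ) → ℝ} (hf : Continuous f) (hc : HasCompactSupport f)
    (hφ : Continuous φ) : Integrable fun p => f p * φ p :=
  (hf.mul hφ).integrable_of_hasCompactSupport hc.mul_right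

theorem continuous_div_pe {m : ℝ} (hm : 0 < m) {g : M3} (hg : g.PosDef)
    {φ : (Fin 3 → ℝ) → ℝ} (hφ : Continuous φ) : Continuous fun p => φ p / pe m g p :=
  hφ.div (continuous_pe m g) fun p => (hm.trans_le (pe_ge hg p)).ne'

/-- Contractions of the stress tensor are momentum integrals. -/
theorem trace_mul_stress {m : ℝ} (hm : 0 < m) {g : M3} (hg : g.PosDef)
    {f : (Fin 3 → ℝ) → ℝ} (hf : Continuous f) (hc : HasCompactSupport f) (X : M3) :
    √g.det * (X * stress m f g).trace = ∫ p, f p * (p ⬝ᵥ X *ᵥ p / pe m g p) := by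
  have hV : √g.det ≠ 0 := (Real.sqrt_pos.2 hg.det_pos).ne'
  have hi : ∀ a b, Integrable fun p : Fin 3 → ℝ => X a b * (f p * (p b * p a / pe m g p)) :=
    fun a b => (integrable_mul hf hc (continuous_div_pe hm hg
      ((continuous_apply b).mul (continuous_apply a)))).const_mul _
  have hs : ∀ a b, √g.det * stress m f g a b = ∫ p, f p * (p a * p b / pe m g p) := by
    intro a b
    rw [stress, Matrix.of_apply, ← integral_const_mul]
    refine integral_congr_ae (Filter.Eventually.of_forall fun p => ?_)
    have : pe m g p ≠ 0 := (hm.trans_le (pe_ge hg p)).ne'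
    change √g.det * (f p * p a * p b / (pe m g p * √g.det)) = _
    field_simp
  have : ∀ p : Fin 3 → ℝ, f p * (p ⬝ᵥ X *ᵥ p / pe m g p)
      = ∑ a, ∑ b, X a b * (f p * (p b * p a / pe m g p)) := by
    intro p
    simp only [dotProduct, mulVec, Finset.mul_sum, Finset.sum_div]
    exact Finset.sum_congr rfl fun a _ => Finset.sum_congr rfl fun b _ => by ring
  simp only [this]
  rw [integral_finsetSum _ fun a _ => integrable_finsetSum _ fun b _ => hi a b]
  rw [Matrix.trace, Finset.mul_sum]
  refine Finset.sum_congr rfl fun a _ => ?_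
  rw [integral_finsetSum _ fun b _ => hi a b, Matrix.diag_apply, Matrix.mul_apply, Finset.mul_sum]
  refine Finset.sum_congr rfl fun b _ => ?_
  rw [integral_const_mul, ← hs]
  ring

/-- Energy per coordinate volume, `E = √det g · ρ`. -/
noncomputable def En (m : ℝ) (f : (Fin 3 → ℝ) → ℝ) (g : M3) : ℝ := √g.det * energyDensity m f g

/-- Three times the pressure per coordinate volume, `τ = √det g · tr S`. -/
noncomputable def Tau (m : ℝ) (f : (Fin 3 → ℝ) → ℝ) (g : M3) : ℝ :=
  √g.det * (g⁻¹ * stress m f g).trace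

theorem En_eq {m : ℝ} {g : M3} (hg : g.PosDef) (f : (Fin 3 → ℝ) → ℝ) :
    En m f g = ∫ p, f p * pe m g p := by
  have hV : √g.det ≠ 0 := (Real.sqrt_pos.2 hg.det_pos).ne'
  rw [En, energyDensity, ← integral_const_mul]
  refine integral_congr_ae (Filter.Eventually.of_forall fun p => ?_)
  change √g.det * (f p * pe m g p / √g.det) = f p * pe m g p
  field_simp

section Matter

variable {m : ℝ} (hm : 0 < m) {g : M3} (hg : g.PosDef) {f : (Fin 3 → ℝ) → ℝ}
  (hf : Continuous f) (hc : HasCompactSupport f) (h0 : ∀ p, 0 ≤ f p)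

include hm hg hf hc

theorem Tau_eq : Tau m f g = ∫ p, f p * (nsq g p / pe m g p) :=
  trace_mul_stress hm hg hf hc _

/-- Since `ω² - g^{ab}p_ap_b = m²` for the particle energy `ω`, the difference `E - τ` is the
manifestly nonnegative integral of `m² / ω`. -/
theorem En_sub_Tau : En m f g - Tau m f g = ∫ p, f p * (m ^ 2 / pe m g p) := by
  rw [Tau_eq hm hg hf hc, En_eq hg, ← integral_sub (integrable_mul hf hc (continuous_pe m g))
    (integrable_mul hf hc (continuous_div_pe hm hg (continuous_nsq g)))]
  refine integral_congr_ae (Filter.Eventually.of_forall fun p => ?_)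
  have h1 : 0 < pe m g p := hm.trans_le (pe_ge hg p)
  have h2 : pe m g p ^ 2 = m ^ 2 + nsq g p :=
    Real.sq_sqrt (by nlinarith [nsq_nonneg hg p, sq_nonneg m])
  change f p * pe m g p - f p * (nsq g p / pe m g p) = f p * (m ^ 2 / pe m g p)
  field_simp
  linear_combination f p * h2

include h0

theorem trace_stress_le {X : M3} {c : ℝ} (hX : ∀ p, p ⬝ᵥ X *ᵥ p ≤ c * nsq g p) :
    √g.det * (X * stress m f g).trace ≤ c * Tau m f g := by
  rw [trace_mul_stress hm hg hf hc, Tau_eq hm hg hf hc, ← integral_const_mul]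
  refine integral_mono (integrable_mul hf hc (continuous_div_pe hm hg (continuous_quad _)))
    ((integrable_mul hf hc (continuous_div_pe hm hg (continuous_quad _))).const_mul _) fun p => ?_
  have h1 : 0 < pe m g p := hm.trans_le (pe_ge hg p)
  change f p * (p ⬝ᵥ X *ᵥ p / pe m g p) ≤ c * (f p * (nsq g p / pe m g p))
  calc _ ≤ f p * (c * nsq g p / pe m g p) := by
        have := h0 p
        have := hX p
        gcongr
    _ = _ := by ring

theorem stress_quad_nonneg (v : Fin 3 → ℝ) :
    0 ≤ √g.det * (v ⬝ᵥ stress m f g *ᵥ v) := by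
  rw [← trace_mul_vecMulVec, Matrix.trace_mul_comm, trace_mul_stress hm hg hf hc]
  refine integral_nonneg fun p => mul_nonneg (h0 p) (div_nonneg ?_ (Real.sqrt_nonneg _))
  rw [vecMulVec_mulVec]
  simp only [dotProduct_smul, MulOpposite.smul_eq_mul_unop, MulOpposite.unop_op]
  rw [dotProduct_comm v p]
  exact mul_self_nonneg _

theorem Tau_nonneg : 0 ≤ Tau m f g := by
  rw [Tau_eq hm hg hf hc]
  exact integral_nonneg fun p => mul_nonneg (h0 p)
    (div_nonneg (nsq_nonneg hg p) (Real.sqrt_nonneg _))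

theorem En_sub_Tau_nonneg : 0 ≤ En m f g - Tau m f g := by
  rw [En_sub_Tau hm hg hf hc]
  exact integral_nonneg fun p => mul_nonneg (h0 p)
    (div_nonneg (sq_nonneg _) (Real.sqrt_nonneg _))

omit hm in
theorem En_ge : m * (∫ p, f p) ≤ En m f g := by
  rw [En_eq hg, ← integral_const_mul]
  refine integral_mono ((hf.integrable_of_hasCompactSupport hc).const_mul _)
    (integrable_mul hf hc (continuous_pe m g)) fun p => ?_
  change m * f p ≤ f p * pe m g p
  rw [mul_comm]
  exact mul_le_mul_of_nonneg_left (pe_ge hg p) (h0 p)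

variable {R : ℝ} (hR : ∀ p, f p ≠ 0 → nsq g p ≤ R)

include hR

theorem Tau_le : Tau m f g ≤ (∫ p, f p) / m * R := by
  rw [Tau_eq hm hg hf hc, show (∫ p, f p) / m * R = (R / m) * ∫ p, f p by ring,
    ← integral_const_mul]
  refine integral_mono (integrable_mul hf hc (continuous_div_pe hm hg (continuous_quad _)))
    ((hf.integrable_of_hasCompactSupport hc).const_mul _) fun p => ?_
  change f p * (nsq g p / pe m g p) ≤ R / m * f p
  by_cases hp : f p = 0
  · simp [hp]
  rw [mul_comm]
  refine mul_le_mul_of_nonneg_right ?_ (h0 p)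
  exact div_le_div₀ ((nsq_nonneg hg p).trans (hR p hp)) (hR p hp) hm (pe_ge hg p)

omit hm in
theorem En_le : En m f g ≤ √(m ^ 2 + R) * ∫ p, f p := by
  rw [En_eq hg, ← integral_const_mul]
  refine integral_mono (integrable_mul hf hc (continuous_pe m g))
    ((hf.integrable_of_hasCompactSupport hc).const_mul _) fun p => ?_
  change f p * pe m g p ≤ √(m ^ 2 + R) * f p
  by_cases hp : f p = 0
  · simp [hp]
  rw [mul_comm]
  exact mul_le_mul_of_nonneg_right (Real.sqrt_le_sqrt (by linarith [hR p hp])) (h0 p)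

theorem En_sub_Tau_ge : m ^ 2 / √(m ^ 2 + R) * (∫ p, f p) ≤ En m f g - Tau m f g := by
  rw [En_sub_Tau hm hg hf hc, ← integral_const_mul]
  refine integral_mono ((hf.integrable_of_hasCompactSupport hc).const_mul _)
    (integrable_mul hf hc (continuous_div_pe hm hg continuous_const)) fun p => ?_
  change m ^ 2 / √(m ^ 2 + R) * f p ≤ f p * (m ^ 2 / pe m g p)
  by_cases hp : f p = 0
  · simp [hp]
  rw [mul_comm]
  refine mul_le_mul_of_nonneg_left ?_ (h0 p)
  exact div_le_div_of_nonneg_left (sq_nonneg m) (hm.trans_le (pe_ge hg p))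
    (Real.sqrt_le_sqrt (by linarith [hR p hp]))

end Matter

/-- The contraction of a symmetric tensor `s` with the stress tensor is controlled by the `g`-norm
`√(tr(g⁻¹sg⁻¹s))` of `s` times the trace of the stress tensor. -/
theorem trace_shear_stress_le {m : ℝ} (hm : 0 < m) {g : M3} (hg : g.PosDef)
    {f : (Fin 3 → ℝ) → ℝ} (hf : Continuous f) (hc : HasCompactSupport f) (h0 : ∀ p, 0 ≤ f p)
    {s : M3} (hs : s.IsSymm) {y : ℝ} (hy : 0 ≤ y) (hsy : (g⁻¹ * s * g⁻¹ * s).trace ≤ y ^ 2) :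
    -(√g.det * (g⁻¹ * s * g⁻¹ * stress m f g).trace) ≤ y * Tau m f g := by
  have := trace_stress_le hm hg hf hc h0 (X := -(g⁻¹ * s * g⁻¹)) (c := y) ?_
  · simpa using this
  intro p
  have hd : IsUnit g.det := (Matrix.isUnit_iff_isUnit_det _).1 hg.isUnit
  have h := quad_sq_le hg hs (g⁻¹ *ᵥ p)
  have e1 : p ⬝ᵥ (g⁻¹ * s * g⁻¹) *ᵥ p = (g⁻¹ *ᵥ p) ⬝ᵥ s *ᵥ (g⁻¹ *ᵥ p) := by
    rw [← mulVec_mulVec, ← mulVec_mulVec, dot_symm (PosDef_isSymm hg.inv), dotProduct_comm _ (s *ᵥ _),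
      dotProduct_comm]
  have e2 : (g⁻¹ *ᵥ p) ⬝ᵥ g *ᵥ (g⁻¹ *ᵥ p) = nsq g p := by
    rw [mulVec_mulVec, Matrix.mul_nonsing_inv _ hd, one_mulVec, dotProduct_comm, nsq]
  rw [neg_mulVec, dotProduct_neg, e1]
  rw [e2] at h
  have h3 : ((g⁻¹ *ᵥ p) ⬝ᵥ s *ᵥ (g⁻¹ *ᵥ p)) ^ 2 ≤ (y * nsq g p) ^ 2 := by
    rw [mul_pow]
    exact h.trans (mul_le_mul_of_nonneg_right hsy (sq_nonneg _))
  exact (neg_le_abs _).trans (abs_le_of_sq_le_sq h3 (mul_nonneg hy (nsq_nonneg hg p)))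

/-! ### Calculus of matrix-valued functions -/

section Calculus

theorem hasDeriv_entry {A : ℝ → M3} {A' : M3} {s : Set ℝ} {t : ℝ} :
    HasDerivWithinAt A A' s t ↔
      ∀ i j, HasDerivWithinAt (fun x => A x i j) (A' i j) s t := by
  have h1 : HasDerivWithinAt A A' s t ↔ ∀ i, HasDerivWithinAt (fun x => A x i) (A' i) s t :=
    hasDerivWithinAt_pi (E' := fun _ : Fin 3 => Fin 3 → ℝ)
  rw [h1]
  exact forall_congr' fun i => hasDerivWithinAt_pi (E' := fun _ : Fin 3 => ℝ)

theorem hasDeriv_mul {A B : ℝ → M3} {A' B' : M3} {s : Set ℝ} {t : ℝ}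
    (hA : HasDerivWithinAt A A' s t) (hB : HasDerivWithinAt B B' s t) :
    HasDerivWithinAt (fun x => A x * B x) (A' * B t + A t * B') s t := by
  rw [hasDeriv_entry] at *
  intro i j
  simp only [Matrix.add_apply, Matrix.mul_apply, ← Finset.sum_add_distrib]
  exact HasDerivWithinAt.fun_sum fun l _ => (hA i l).mul (hB l j)

theorem hasDeriv_trace {A : ℝ → M3} {A' : M3} {s : Set ℝ} {t : ℝ}
    (hA : HasDerivWithinAt A A' s t) :
    HasDerivWithinAt (fun x => (A x).trace) A'.trace s t := by
  rw [hasDeriv_entry] at hA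
  simp only [Matrix.trace, Matrix.diag_apply]
  exact HasDerivWithinAt.fun_sum fun i _ => hA i i

theorem hasDeriv_quad {A : ℝ → M3} {A' : M3} {s : Set ℝ} {t : ℝ}
    (hA : HasDerivWithinAt A A' s t) (v : Fin 3 → ℝ) :
    HasDerivWithinAt (fun x => v ⬝ᵥ A x *ᵥ v) (v ⬝ᵥ A' *ᵥ v) s t := by
  rw [hasDeriv_entry] at hA
  simp only [dotProduct, mulVec]
  exact HasDerivWithinAt.fun_sum fun i _ => HasDerivWithinAt.const_mul _ <|
    HasDerivWithinAt.fun_sum fun j _ => (hA i j).mul_const _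

/-- Jacobi's formula. -/
theorem hasDeriv_det {A : ℝ → M3} {A' : M3} {s : Set ℝ} {t : ℝ}
    (hA : HasDerivWithinAt A A' s t) :
    HasDerivWithinAt (fun x => (A x).det) ((A t).adjugate * A').trace s t := by
  rw [hasDeriv_entry] at hA
  simp only [Matrix.det_fin_three]
  have m3 := fun i j k l m n => ((hA i j).fun_mul (hA k l)).fun_mul (hA m n)
  refine HasDerivWithinAt.congr_deriv ((((((m3 0 0 1 1 2 2).fun_sub (m3 0 0 1 2 2 1)).fun_sub (m3 0 1 1 0 2 2)).fun_add
    (m3 0 1 1 2 2 0)).fun_add (m3 0 2 1 0 2 1)).fun_sub (m3 0 2 1 1 2 0)) ?_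
  rw [Matrix.adjugate_fin_three]
  simp [Matrix.trace_fin_three, Matrix.vecMul, dotProduct, Fin.sum_univ_three]
  ring

/-- Derivative of the inverse. Differentiability comes from the adjugate formula, the value from
differentiating `A⁻¹ A = 1`. -/
theorem hasDeriv_inv {A : ℝ → M3} {A' : M3} {s : Set ℝ} {t : ℝ}
    (hs : UniqueDiffWithinAt ℝ s t) (hts : t ∈ s) (hu : ∀ x ∈ s, IsUnit (A x).det)
    (hA : HasDerivWithinAt A A' s t) :
    HasDerivWithinAt (fun x => (A x)⁻¹) (-((A t)⁻¹ * A' * (A t)⁻¹)) s t := by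
  have hdiff : ∃ D : M3, HasDerivWithinAt (fun x => (A x)⁻¹) D s t := by
    have hdet := (hasDeriv_det hA).differentiableWithinAt.inv (hu t hts).ne_zero
    have he := hasDeriv_entry.1 hA
    have hadj : ∀ i j, DifferentiableWithinAt ℝ (fun x => (A x).adjugate i j) s t := by
      have d := fun i j => (he i j).differentiableWithinAt
      intro i j
      simp only [Matrix.adjugate_fin_three]
      fin_cases i <;> fin_cases j <;> simp <;> fun_prop (disch := assumption)
    refine ⟨Matrix.of fun i j => derivWithin (fun x => (A x)⁻¹ i j) s t, ?_⟩
    rw [hasDeriv_entry]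
    intro i j
    refine DifferentiableWithinAt.hasDerivWithinAt ?_
    simp only [Matrix.inv_def, Ring.inverse_eq_inv, Matrix.smul_apply, smul_eq_mul]
    exact hdet.mul (hadj i j)
  obtain ⟨D, hD⟩ := hdiff
  have h1 := hasDeriv_mul hD hA
  have h2 : HasDerivWithinAt (fun x => (A x)⁻¹ * A x) 0 s t :=
    (hasDerivWithinAt_const t s (1 : M3)).congr
      (fun x hx => Matrix.nonsing_inv_mul _ (hu x hx)) (Matrix.nonsing_inv_mul _ (hu t hts))
  have h3 := hs.eq_deriv _ h1 h2
  have h4 : D = -((A t)⁻¹ * A' * (A t)⁻¹) := by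
    have : D * A t * (A t)⁻¹ = -((A t)⁻¹ * A') * (A t)⁻¹ := by
      rw [eq_neg_of_add_eq_zero_left h3]
    rwa [Matrix.mul_assoc, Matrix.mul_nonsing_inv _ (hu t hts), Matrix.mul_one,
      Matrix.neg_mul] at this
  rwa [h4] at hD

end Calculus

/-! ### Evolution equations -/

/-- The volume density `√det g`. -/
noncomputable def Vol (g : ℝ → M3) (t : ℝ) : ℝ := √(g t).det

/-- `W = -√det g · H`, the time derivative of the volume density. -/
noncomputable def VolD (g k : ℝ → M3) (t : ℝ) : ℝ := -(Vol g t * meanCurv (g t) (k t))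

/-- `D = det g · tr (g⁻¹σg⁻¹σ)`, written through `k` and `H`. -/
noncomputable def Dsh (g k : ℝ → M3) (t : ℝ) : ℝ :=
  Vol g t ^ 2 * (((g t)⁻¹ * k t * ((g t)⁻¹ * k t)).trace - meanCurv (g t) (k t) ^ 2 / 3)

theorem shear_isSymm {g k : M3} (hg : g.IsSymm) (hk : k.IsSymm) : (shear g k).IsSymm := by
  unfold Matrix.IsSymm shear
  rw [transpose_sub, transpose_smul, hg.eq, hk.eq]

theorem inv_mul_shear {g k : M3} (hg : IsUnit g.det) :
    g⁻¹ * shear g k = g⁻¹ * k - (meanCurv g k / 3) • 1 := by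
  rw [shear, Matrix.mul_sub, Matrix.mul_smul, Matrix.nonsing_inv_mul _ hg]

theorem trace_shear_sq {g k : M3} (hg : IsUnit g.det) :
    (g⁻¹ * shear g k * g⁻¹ * shear g k).trace
      = (g⁻¹ * k * (g⁻¹ * k)).trace - meanCurv g k ^ 2 / 3 := by
  rw [Matrix.mul_assoc, inv_mul_shear hg]
  have : (g⁻¹ * k).trace = meanCurv g k := rfl
  simp only [Matrix.mul_sub, Matrix.sub_mul, Matrix.mul_smul, Matrix.smul_mul, Matrix.trace_sub,
    Matrix.trace_smul, Matrix.mul_one, Matrix.one_mul, this, smul_eq_mul, Matrix.trace_one,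
    Fintype.card_fin]
  push_cast
  ring

namespace BianchiIVlasov

variable {t₀ m : ℝ} {g k : ℝ → M3} {f₀ : (Fin 3 → ℝ) → ℝ} (hsol : BianchiIVlasov t₀ m g k f₀)
  {t : ℝ} (ht : t₀ ≤ t)

include hsol

theorem hf : Continuous f₀ := hsol.f₀_smooth.continuous

include ht

theorem isUnit_det : IsUnit (g t).det :=
  (Matrix.isUnit_iff_isUnit_det _).1 (hsol.g_posdef t ht).isUnit

theorem Vol_pos : 0 < Vol g t := Real.sqrt_pos.2 (hsol.g_posdef t ht).det_pos

theorem hasDeriv_inv : HasDerivWithinAt (fun x => (g x)⁻¹)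
    ((2 : ℝ) • ((g t)⁻¹ * k t * (g t)⁻¹)) (Set.Ici t₀) t := by
  have := _root_.hasDeriv_inv (uniqueDiffOn_Ici t₀ t ht) ht (fun x hx => hsol.isUnit_det hx)
    (hsol.evol_g t ht)
  refine this.congr_deriv ?_
  simp

theorem hasDeriv_nsq (p : Fin 3 → ℝ) : HasDerivWithinAt (fun x => nsq (g x) p)
    (2 * (((g t)⁻¹ *ᵥ p) ⬝ᵥ k t *ᵥ ((g t)⁻¹ *ᵥ p))) (Set.Ici t₀) t := by
  refine (hasDeriv_quad (hsol.hasDeriv_inv ht) p).congr_deriv ?_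
  rw [smul_mulVec, dotProduct_smul, smul_eq_mul, ← mulVec_mulVec, ← mulVec_mulVec,
    dot_symm (PosDef_isSymm (hsol.g_posdef t ht).inv), dotProduct_comm]

theorem hasDeriv_Vol : HasDerivWithinAt (Vol g) (VolD g k t) (Set.Ici t₀) t := by
  have hd := hsol.isUnit_det ht
  have hV := hsol.Vol_pos ht
  have h := (hasDeriv_det (hsol.evol_g t ht)).sqrt hd.ne_zero
  refine h.congr_deriv ?_
  have hadj : (g t).adjugate = (g t).det • (g t)⁻¹ := by
    rw [Matrix.inv_def, smul_smul, Ring.inverse_eq_inv, mul_inv_cancel₀ hd.ne_zero, one_smul]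
  have hsq : (g t).det = Vol g t ^ 2 := (Real.sq_sqrt (hsol.g_posdef t ht).det_pos.le).symm
  rw [hadj]
  simp only [Matrix.smul_mul, Matrix.mul_smul, Matrix.trace_smul, smul_eq_mul, VolD]
  change _ / (2 * Vol g t) = _
  rw [hsq]
  change -2 * (_ * meanCurv (g t) (k t)) / _ = _
  field_simp

/-- Evolution of the mixed second fundamental form `g⁻¹k`. -/
theorem hasDeriv_mixed : HasDerivWithinAt (fun x => (g x)⁻¹ * k x)
    (meanCurv (g t) (k t) • ((g t)⁻¹ * k t) - (8 * Real.pi) • ((g t)⁻¹ * stress m f₀ (g t))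
      + (4 * Real.pi * (((g t)⁻¹ * stress m f₀ (g t)).trace - energyDensity m f₀ (g t))) • 1)
    (Set.Ici t₀) t := by
  refine (hasDeriv_mul (hsol.hasDeriv_inv ht) (hsol.evol_k t ht)).congr_deriv ?_
  simp only [Matrix.mul_sub, Matrix.mul_smul, Matrix.smul_mul,
    Matrix.nonsing_inv_mul _ (hsol.isUnit_det ht), Matrix.mul_assoc, smul_sub, smul_smul]
  module

theorem hasDeriv_meanCurv : HasDerivWithinAt (fun x => meanCurv (g x) (k x))
    (meanCurv (g t) (k t) ^ 2 + 4 * Real.pi * ((g t)⁻¹ * stress m f₀ (g t)).trace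
      - 12 * Real.pi * energyDensity m f₀ (g t)) (Set.Ici t₀) t := by
  refine (hasDeriv_trace (hsol.hasDeriv_mixed ht)).congr_deriv ?_
  have : ((g t)⁻¹ * k t).trace = meanCurv (g t) (k t) := rfl
  simp only [Matrix.trace_add, Matrix.trace_sub, Matrix.trace_smul, this, smul_eq_mul,
    Matrix.trace_one, Fintype.card_fin]
  push_cast
  ring

/-- The terms quadratic in `k` cancel in `W'`, which is a pure matter term. -/
theorem hasDeriv_VolD : HasDerivWithinAt (VolD g k)
    (12 * Real.pi * En m f₀ (g t) - 4 * Real.pi * Tau m f₀ (g t)) (Set.Ici t₀) t := by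
  refine ((hsol.hasDeriv_Vol ht).mul (hsol.hasDeriv_meanCurv ht)).neg.congr_deriv ?_
  simp only [VolD, En, Tau, Vol]
  ring

/-- The rescaling by `det g` cancels the damping of the shear: only its coupling to the stress tensor
remains. -/
theorem hasDeriv_Dsh : HasDerivWithinAt (Dsh g k)
    (16 * Real.pi * -(Vol g t * ((g t)⁻¹ * (Vol g t • shear (g t) (k t)) * (g t)⁻¹
      * stress m f₀ (g t)).trace)) (Set.Ici t₀) t := by
  have h1 := hasDeriv_trace (hasDeriv_mul (hsol.hasDeriv_mixed ht) (hsol.hasDeriv_mixed ht))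
  refine (((hsol.hasDeriv_Vol ht).fun_pow 2).mul
    (h1.fun_sub (((hsol.hasDeriv_meanCurv ht).fun_pow 2).div_const 3))).congr_deriv ?_
  rw [Matrix.mul_smul, inv_mul_shear (hsol.isUnit_det ht)]
  have hH : ((g t)⁻¹ * k t).trace = meanCurv (g t) (k t) := rfl
  have hc := Matrix.trace_mul_comm ((g t)⁻¹ * k t) ((g t)⁻¹ * stress m f₀ (g t))
  simp only [← Matrix.mul_assoc] at hc ⊢
  simp only [Matrix.mul_sub, Matrix.sub_mul, Matrix.mul_add, Matrix.add_mul, Matrix.mul_smul,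
    Matrix.smul_mul, Matrix.trace_add, Matrix.trace_sub, Matrix.trace_smul, smul_eq_mul, ← hc, hH,
    Matrix.mul_one, Matrix.one_mul, VolD, ← Matrix.mul_assoc]
  push_cast
  ring

theorem Dsh_eq : Dsh g k t = ((g t)⁻¹ * (Vol g t • shear (g t) (k t)) * (g t)⁻¹ *
    (Vol g t • shear (g t) (k t))).trace := by
  simp only [Matrix.mul_smul, Matrix.smul_mul, Matrix.trace_smul, smul_eq_mul,
    trace_shear_sq (hsol.isUnit_det ht), Dsh]
  ring

theorem symm_Vshear : (Vol g t • shear (g t) (k t)).IsSymm := by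
  unfold Matrix.IsSymm
  rw [transpose_smul, (shear_isSymm (hsol.g_symm t ht) (hsol.k_symm t ht)).eq]

/-- If `D ≤ y²` then `V |σ(v,v)| ≤ y g(v,v)`. -/
theorem abs_shear_le {y : ℝ} (hy : 0 ≤ y) (hD : Dsh g k t ≤ y ^ 2) (v : Fin 3 → ℝ) :
    |Vol g t * (v ⬝ᵥ shear (g t) (k t) *ᵥ v)| ≤ y * (v ⬝ᵥ g t *ᵥ v) := by
  have hg := hsol.g_posdef t ht
  have h := quad_sq_le hg (hsol.symm_Vshear ht) v
  rw [← hsol.Dsh_eq ht, smul_mulVec, dotProduct_smul, smul_eq_mul] at h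
  have h2 : 0 ≤ v ⬝ᵥ g t *ᵥ v := by simpa using hg.posSemidef.dotProduct_mulVec_nonneg v
  refine abs_le_of_sq_le_sq (h.trans ?_) (mul_nonneg hy h2)
  rw [mul_pow]
  exact mul_le_mul_of_nonneg_right hD (sq_nonneg _)

omit hsol ht in
theorem shear_quad (v : Fin 3 → ℝ) : v ⬝ᵥ k t *ᵥ v
    = v ⬝ᵥ shear (g t) (k t) *ᵥ v + meanCurv (g t) (k t) / 3 * (v ⬝ᵥ g t *ᵥ v) := by
  rw [shear, sub_mulVec, smul_mulVec, dotProduct_sub, dotProduct_smul, smul_eq_mul]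
  ring

/-- For each `v`, the form `q = -V k(v,v) - μ g(v,v)` satisfies `q' ≥ (2μ/V) q` as soon as
`μ' ≤ 4π (E - τ)`: all remaining
terms in `q' - (2μ/V) q` are nonnegative, the quadratic ones combining into `(2/V) |V k v + μ g v|²`. -/
theorem exists_hasDeriv_quad (v : Fin 3 → ℝ) {μ : ℝ → ℝ} {μ' : ℝ}
    (hμ : HasDerivWithinAt μ μ' (Set.Ici t₀) t)
    (hμ' : μ' ≤ 4 * Real.pi * (En m f₀ (g t) - Tau m f₀ (g t))) :
    ∃ q', HasDerivWithinAt (fun x => -(Vol g x * (v ⬝ᵥ k x *ᵥ v)) - μ x * (v ⬝ᵥ g x *ᵥ v)) q'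
      (Set.Ici t₀) t ∧
      2 * μ t / Vol g t * (-(Vol g t * (v ⬝ᵥ k t *ᵥ v)) - μ t * (v ⬝ᵥ g t *ᵥ v)) ≤ q' := by
  have hV := hsol.Vol_pos ht
  have hg := hsol.g_posdef t ht
  have hgi := PosDef_isSymm hg.inv
  have hks := hsol.k_symm t ht
  refine ⟨_, (((hsol.hasDeriv_Vol ht).mul (hasDeriv_quad (hsol.evol_k t ht) v)).neg.sub
    (hμ.mul (hasDeriv_quad (hsol.evol_g t ht) v))), ?_⟩
  set V := Vol g t with hVd
  have hS := stress_quad_nonneg hsol.m_pos hg hsol.hf hsol.f₀_cpt hsol.f₀_nonneg v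
  have hQ := nsq_nonneg hg ((-V • k t - μ t • g t) *ᵥ v)
  have hgv : 0 ≤ v ⬝ᵥ g t *ᵥ v := by simpa using hg.posSemidef.dotProduct_mulVec_nonneg v
  have eQ : nsq (g t) ((-V • k t - μ t • g t) *ᵥ v)
      = V ^ 2 * (v ⬝ᵥ (k t * (g t)⁻¹ * k t) *ᵥ v) + 2 * μ t * V * (v ⬝ᵥ k t *ᵥ v)
        + μ t ^ 2 * (v ⬝ᵥ g t *ᵥ v) := by
    have hu := hsol.isUnit_det ht
    have e1 : (g t)⁻¹ *ᵥ g t *ᵥ v = v := by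
      rw [mulVec_mulVec, Matrix.nonsing_inv_mul _ hu, one_mulVec]
    have e2 : (k t *ᵥ v) ⬝ᵥ (g t)⁻¹ *ᵥ k t *ᵥ v = v ⬝ᵥ (k t * (g t)⁻¹ * k t) *ᵥ v := by
      rw [← mulVec_mulVec, ← mulVec_mulVec, dotProduct_comm, dot_symm hks]
    have e3 : (g t *ᵥ v) ⬝ᵥ (g t)⁻¹ *ᵥ k t *ᵥ v = v ⬝ᵥ k t *ᵥ v := by
      rw [dot_symm hgi, e1, dotProduct_comm]
    simp only [nsq, sub_mulVec, smul_mulVec, mulVec_sub, mulVec_smul, dotProduct_sub,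
      sub_dotProduct, dotProduct_smul, smul_dotProduct, smul_eq_mul, e1, e2, e3]
    rw [dotProduct_comm (k t *ᵥ v) v, dotProduct_comm (g t *ᵥ v) v]
    ring
  rw [eQ] at hQ
  have hQ2 := mul_nonneg (div_nonneg zero_le_two hV.le) hQ
  have hE : 0 ≤ (4 * Real.pi * (En m f₀ (g t) - Tau m f₀ (g t)) - μ') * (v ⬝ᵥ g t *ᵥ v) :=
    mul_nonneg (by linarith) hgv
  have hS2 : 0 ≤ 8 * Real.pi * (V * (v ⬝ᵥ stress m f₀ (g t) *ᵥ v)) :=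
    mul_nonneg (by positivity) hS
  rw [← sub_nonneg]
  refine (add_nonneg (add_nonneg hQ2 hE) hS2).trans_eq ?_
  have hEn : En m f₀ (g t) = V * energyDensity m f₀ (g t) := rfl
  have hTau : Tau m f₀ (g t) = V * ((g t)⁻¹ * stress m f₀ (g t)).trace := rfl
  rw [hEn, hTau, VolD, ← hVd]
  simp only [sub_mulVec, smul_mulVec, dotProduct_sub, dotProduct_smul, smul_eq_mul]
  field_simp
  ring

/-- Under `D ≤ y²`, the shear derivative is at most `16π y τ`. -/
theorem exists_hasDeriv_Dsh : ∃ D', HasDerivWithinAt (Dsh g k) D' (Set.Ici t₀) t ∧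
    ∀ y, 0 ≤ y → Dsh g k t ≤ y ^ 2 → D' ≤ 16 * Real.pi * (y * Tau m f₀ (g t)) := by
  refine ⟨_, hsol.hasDeriv_Dsh ht, fun y hy hD => ?_⟩
  refine mul_le_mul_of_nonneg_left ?_ (by positivity)
  rw [hsol.Dsh_eq ht] at hD
  exact trace_shear_stress_le hsol.m_pos (hsol.g_posdef t ht) hsol.hf hsol.f₀_cpt hsol.f₀_nonneg
    (hsol.symm_Vshear ht) hy hD

end BianchiIVlasov

/-! ### Comparison lemmas and growth of the volume -/

section Comparison

variable {t₀ : ℝ} {f f' B B' : ℝ → ℝ}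

/-- Barrier comparison: the strict derivative inequality is only needed at contact times. -/
theorem cmp_strict (hf : ∀ t ≥ t₀, HasDerivWithinAt f (f' t) (Set.Ici t₀) t)
    (hB : ∀ t ≥ t₀, HasDerivWithinAt B (B' t) (Set.Ici t₀) t) (h0 : f t₀ ≤ B t₀)
    (bound : ∀ t ≥ t₀, f t = B t → f' t < B' t) : ∀ t ≥ t₀, f t ≤ B t := by
  intro t ht
  refine image_le_of_deriv_right_lt_deriv_boundary' (a := t₀) (b := t) (f' := f') (B' := B')
    (fun x hx => ((hf x hx.1).continuousWithinAt).mono Set.Icc_subset_Ici_self)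
    (fun x hx => (hf x hx.1).mono (Set.Ici_subset_Ici.2 hx.1)) h0
    (fun x hx => ((hB x hx.1).continuousWithinAt).mono Set.Icc_subset_Ici_self)
    (fun x hx => (hB x hx.1).mono (Set.Ici_subset_Ici.2 hx.1))
    (fun x hx => bound x hx.1) ⟨ht, le_rfl⟩

theorem cmp_le (hf : ∀ t ≥ t₀, HasDerivWithinAt f (f' t) (Set.Ici t₀) t)
    (hB : ∀ t ≥ t₀, HasDerivWithinAt B (B' t) (Set.Ici t₀) t) (h0 : f t₀ ≤ B t₀)
    (bound : ∀ t ≥ t₀, f' t ≤ B' t) : ∀ t ≥ t₀, f t ≤ B t := by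
  intro t ht
  refine image_le_of_deriv_right_le_deriv_boundary (a := t₀) (b := t) (f' := f') (B' := B')
    (fun x hx => ((hf x hx.1).continuousWithinAt).mono Set.Icc_subset_Ici_self)
    (fun x hx => (hf x hx.1).mono (Set.Ici_subset_Ici.2 hx.1)) h0
    (fun x hx => ((hB x hx.1).continuousWithinAt).mono Set.Icc_subset_Ici_self)
    (fun x hx => (hB x hx.1).mono (Set.Ici_subset_Ici.2 hx.1))
    (fun x hx => bound x hx.1) ⟨ht, le_rfl⟩

/-- A solution of `f' ≥ c f` with `c` bounded above stays nonnegative. -/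
theorem nonneg_of_deriv_ge {c : ℝ → ℝ} {L : ℝ}
    (hf : ∀ t ≥ t₀, HasDerivWithinAt f (f' t) (Set.Ici t₀) t)
    (hfc : ∀ t ≥ t₀, c t * f t ≤ f' t) (hc : ∀ t ≥ t₀, c t ≤ L) (h0 : 0 ≤ f t₀) :
    ∀ t ≥ t₀, 0 ≤ f t := by
  intro t ht
  refine le_of_forall_pos_le_add fun ε hε => ?_
  -- `-f` cannot cross the barrier `η exp((L+1)(t - t₀))`, for any `η > 0`
  have key : ∀ η > 0, -f t ≤ η * Real.exp ((L + 1) * (t - t₀)) := by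
    intro η hη
    refine cmp_strict (t₀ := t₀) (f := fun x => -f x) (f' := fun x => -f' x)
      (B := fun x => η * Real.exp ((L + 1) * (x - t₀)))
      (B' := fun x => η * (Real.exp ((L + 1) * (x - t₀)) * ((L + 1) * 1)))
      (fun x hx => (hf x hx).neg) (fun x _ => ?_) ?_ ?_ t ht
    · exact (((((hasDerivAt_id x).sub_const t₀).const_mul (L + 1)).exp).const_mul
        η).hasDerivWithinAt
    · simp; linarith
    · intro x hx hxe
      have hp : 0 < η * Real.exp ((L + 1) * (x - t₀)) := by positivity
      have h1 := hfc x hx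
      have h2 := hc x hx
      have hxe : -f x = η * Real.exp ((L + 1) * (x - t₀)) := hxe
      rw [← hxe] at hp
      have : η * (Real.exp ((L + 1) * (x - t₀)) * ((L + 1) * 1)) = (L + 1) * -f x := by
        rw [hxe]; ring
      rw [this]
      nlinarith
  have := key (ε / Real.exp ((L + 1) * (t - t₀))) (by positivity)
  rw [div_mul_cancel₀ _ (Real.exp_pos _).ne'] at this
  linarith

/-- Grönwall in integrated form: `f' ≤ ψ' f` gives `f ≤ f(t₀) exp(ψ - ψ(t₀))`. -/
theorem le_exp_of_deriv_le {ψ ψ' : ℝ → ℝ}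
    (hf : ∀ t ≥ t₀, HasDerivWithinAt f (f' t) (Set.Ici t₀) t)
    (hψ : ∀ t ≥ t₀, HasDerivWithinAt ψ (ψ' t) (Set.Ici t₀) t)
    (bound : ∀ t ≥ t₀, f' t ≤ ψ' t * f t) :
    ∀ t ≥ t₀, f t ≤ f t₀ * Real.exp (ψ t - ψ t₀) := by
  intro t ht
  have h := cmp_le (t₀ := t₀) (f := fun x => f x * Real.exp (-ψ x)) (B := fun _ => f t₀ * Real.exp (-ψ t₀))
    (B' := fun _ => 0) (fun x hx => (hf x hx).mul ((hψ x hx).neg.exp))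
    (fun x _ => hasDerivWithinAt_const _ _ _) le_rfl (fun x hx => ?_) t ht
  · have h : f t * Real.exp (-ψ t) ≤ f t₀ * Real.exp (-ψ t₀) := h
    calc f t = f t * Real.exp (-ψ t) * Real.exp (ψ t) := by
          rw [mul_assoc, ← Real.exp_add]; simp
      _ ≤ f t₀ * Real.exp (-ψ t₀) * Real.exp (ψ t) := by gcongr
      _ = _ := by rw [mul_assoc, ← Real.exp_add]; ring_nf
  · have h1 := bound x hx
    have h2 := Real.exp_pos (-ψ x)
    change f' x * Real.exp (-ψ x) + f x * (Real.exp (-ψ x) * -ψ' x) ≤ 0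
    nlinarith [mul_le_mul_of_nonneg_right h1 h2.le]

/-- Barrier argument for `D' ≤ 16π y τ` on `D ≤ y²`, that is for `(√D)' ≤ 8π τ`. -/
theorem le_sq_of_deriv_le {D D' τ y y' : ℝ → ℝ}
    (hD : ∀ t ≥ t₀, HasDerivWithinAt D (D' t) (Set.Ici t₀) t)
    (hD' : ∀ t ≥ t₀, ∀ y, 0 ≤ y → D t ≤ y ^ 2 → D' t ≤ 16 * Real.pi * (y * τ t))
    (hy : ∀ t ≥ t₀, HasDerivWithinAt y (y' t) (Set.Ici t₀) t) (hy0 : ∀ t ≥ t₀, 0 < y t)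
    (hy' : ∀ t ≥ t₀, 8 * Real.pi * τ t < y' t) (h0 : D t₀ ≤ y t₀ ^ 2) :
    ∀ t ≥ t₀, D t ≤ y t ^ 2 := by
  refine cmp_strict hD (B' := fun t => 2 * y t * y' t) (fun t ht => ?_) h0 fun t ht he => ?_
  · refine ((hy t ht).fun_pow 2).congr_deriv ?_
    push_cast; ring
  · have h1 := hD' t ht (y t) (hy0 t ht).le he.le
    have h2 := mul_lt_mul_of_pos_left (hy' t ht) (hy0 t ht)
    nlinarith

end Comparison

/-- Shifted time `u = 1 + t - t₀`, which is at least `1`. -/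
def sh (t₀ t : ℝ) : ℝ := 1 + t - t₀

theorem sh_ge {t₀ t : ℝ} (ht : t₀ ≤ t) : 1 ≤ sh t₀ t := by unfold sh; linarith

theorem sh_pos {t₀ t : ℝ} (ht : t₀ ≤ t) : 0 < sh t₀ t := by linarith [sh_ge ht]

theorem sh_self (t₀ : ℝ) : sh t₀ t₀ = 1 := by unfold sh; ring

theorem hasDeriv_sh (t₀ t : ℝ) (s : Set ℝ) : HasDerivWithinAt (sh t₀) 1 s t := by
  unfold sh
  exact (((hasDerivAt_id t).const_add 1).sub_const t₀).hasDerivWithinAt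

theorem hasDeriv_sh_rpow {t₀ t : ℝ} (ht : t₀ ≤ t) (r : ℝ) (s : Set ℝ) :
    HasDerivWithinAt (fun x => sh t₀ x ^ r) (r * sh t₀ t ^ (r - 1)) s t := by
  refine ((hasDeriv_sh t₀ t s).rpow_const (Or.inl (sh_pos ht).ne')).congr_deriv ?_
  ring

namespace BianchiIVlasov

variable {t₀ m : ℝ} {g k : ℝ → M3} {f₀ : (Fin 3 → ℝ) → ℝ} (hsol : BianchiIVlasov t₀ m g k f₀)

include hsol

/-- `W` and `V` grow at least linearly and quadratically: `W' ≥ 8πE ≥ 8πmN > 0`. -/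
theorem growth_lower (hexp : meanCurv (g t₀) (k t₀) < 0) (hf₀ : f₀ ≠ 0) :
    ∃ c > 0, ∀ t ≥ t₀, c * sh t₀ t ≤ VolD g k t ∧ c * sh t₀ t ^ 2 ≤ Vol g t := by
  have hN : 0 < ∫ p, f₀ p := by
    obtain ⟨x, hx⟩ := Function.ne_iff.1 hf₀
    exact hsol.hf.integral_pos_of_hasCompactSupport_nonneg_nonzero hsol.f₀_cpt hsol.f₀_nonneg hx
  set a := 8 * Real.pi * (m * ∫ p, f₀ p)
  have ha : 0 < a := by have := hsol.m_pos; positivity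
  have hW0 : 0 < VolD g k t₀ := by
    have := hsol.Vol_pos le_rfl
    rw [VolD]; nlinarith
  have hV0 := hsol.Vol_pos (t := t₀) le_rfl
  set c := min (Vol g t₀) (min (VolD g k t₀) a / 2)
  have hc : 0 < c := by positivity
  have c1 : c ≤ Vol g t₀ := min_le_left _ _
  have c2 : 2 * c ≤ min (VolD g k t₀) a := by
    linarith [min_le_right (Vol g t₀) (min (VolD g k t₀) a / 2)]
  have c3 := c2.trans (min_le_left _ _)
  have c4 := c2.trans (min_le_right _ _)
  have hW : ∀ t ≥ t₀, 2 * c * sh t₀ t ≤ VolD g k t := by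
    refine cmp_le (fun t _ => (hasDeriv_sh t₀ t _).const_mul (2 * c))
      (fun t ht => hsol.hasDeriv_VolD ht) (by rw [sh_self]; linarith) fun t ht => ?_
    have h1 := En_ge (m := m) (hsol.g_posdef t ht) hsol.hf hsol.f₀_cpt hsol.f₀_nonneg
    have h2 := En_sub_Tau_nonneg hsol.m_pos (hsol.g_posdef t ht) hsol.hf hsol.f₀_cpt hsol.f₀_nonneg
    have h3 := mul_nonneg Real.pi_pos.le h2
    have h4 := mul_le_mul_of_nonneg_left h1 Real.pi_pos.le
    linarith
  have hV : ∀ t ≥ t₀, c * sh t₀ t ^ 2 ≤ Vol g t := by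
    refine cmp_le (fun t _ => ((hasDeriv_sh t₀ t _).fun_pow 2).const_mul c)
      (fun t ht => hsol.hasDeriv_Vol ht) (by rw [sh_self]; linarith) fun t ht => ?_
    have := hW t ht
    push_cast
    linarith
  refine ⟨c, hc, fun t ht => ⟨?_, hV t ht⟩⟩
  have := hW t ht
  have := mul_pos hc (sh_pos ht)
  linarith

/-- The momenta in the support of `f₀` are bounded at the initial time. -/
theorem exists_initial_bound : ∃ R ≥ 0, ∀ p, f₀ p ≠ 0 → nsq (g t₀) p ≤ R := by
  obtain ⟨R, hR⟩ := (hsol.f₀_cpt.isCompact.image (continuous_nsq (g t₀))).bddAbove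
  refine ⟨max R 0, le_max_right _ _, fun p hp => (hR ?_).trans (le_max_left _ _)⟩
  exact ⟨p, subset_tsupport _ hp, rfl⟩

/-- Lower bounds of the form `-V k ≥ μ g` propagate when `μ' ≤ 4π(E - τ)`. -/
theorem quad_ge_of_initial {μ μ' : ℝ → ℝ} {L : ℝ}
    (hμ : ∀ t ≥ t₀, HasDerivWithinAt μ (μ' t) (Set.Ici t₀) t)
    (hμ' : ∀ t ≥ t₀, μ' t ≤ 4 * Real.pi * (En m f₀ (g t) - Tau m f₀ (g t)))
    (hL : ∀ t ≥ t₀, 2 * μ t / Vol g t ≤ L) (v : Fin 3 → ℝ)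
    (h0 : μ t₀ * (v ⬝ᵥ g t₀ *ᵥ v) ≤ -(Vol g t₀ * (v ⬝ᵥ k t₀ *ᵥ v))) :
    ∀ t ≥ t₀, μ t * (v ⬝ᵥ g t *ᵥ v) ≤ -(Vol g t * (v ⬝ᵥ k t *ᵥ v)) := by
  intro t ht
  have H := fun (t : ℝ) (ht : t₀ ≤ t) => hsol.exists_hasDeriv_quad ht v (hμ t ht) (hμ' t ht)
  choose! q' hq hq' using H
  have := nonneg_of_deriv_ge (L := L) hq hq' hL (by linarith) t ht
  linarith

/-- If `-V k ≥ μ g` then `(g^{ab}p_ap_b)' ≤ -(2μ/V) g^{ab}p_ap_b`. -/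
theorem nsq_deriv_le {t : ℝ} (ht : t₀ ≤ t) {μ : ℝ}
    (h : ∀ v : Fin 3 → ℝ, μ * (v ⬝ᵥ g t *ᵥ v) ≤ -(Vol g t * (v ⬝ᵥ k t *ᵥ v)))
    (p : Fin 3 → ℝ) :
    2 * (((g t)⁻¹ *ᵥ p) ⬝ᵥ k t *ᵥ ((g t)⁻¹ *ᵥ p)) ≤ -(2 * μ / Vol g t) * nsq (g t) p := by
  have hV := hsol.Vol_pos ht
  have h1 := h ((g t)⁻¹ *ᵥ p)
  rw [mulVec_mulVec, Matrix.mul_nonsing_inv _ (hsol.isUnit_det ht), one_mulVec,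
    dotProduct_comm _ p] at h1
  change μ * nsq (g t) p ≤ _ at h1
  rw [show -(2 * μ / Vol g t) * nsq (g t) p = -(2 * (μ * nsq (g t) p)) / Vol g t by ring,
    le_div_iff₀ hV]
  nlinarith

end BianchiIVlasov

/-! ### Decay of momenta and shear -/

namespace BianchiIVlasov

variable {t₀ m : ℝ} {g k : ℝ → M3} {f₀ : (Fin 3 → ℝ) → ℝ} (hsol : BianchiIVlasov t₀ m g k f₀)

include hsol

theorem quad_g_nonneg {t : ℝ} (ht : t₀ ≤ t) (v : Fin 3 → ℝ) : 0 ≤ v ⬝ᵥ g t *ᵥ v := by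
  simpa using (hsol.g_posdef t ht).posSemidef.dotProduct_mulVec_nonneg v

theorem E_sub_tau_nonneg {t : ℝ} (ht : t₀ ≤ t) : 0 ≤ En m f₀ (g t) - Tau m f₀ (g t) :=
  En_sub_Tau_nonneg hsol.m_pos (hsol.g_posdef t ht) hsol.hf hsol.f₀_cpt hsol.f₀_nonneg

theorem tau_le {t : ℝ} (ht : t₀ ≤ t) {R : ℝ} (hR : ∀ p, f₀ p ≠ 0 → nsq (g t) p ≤ R) :
    Tau m f₀ (g t) ≤ (∫ p, f₀ p) / m * R :=
  Tau_le hsol.m_pos (hsol.g_posdef t ht) hsol.hf hsol.f₀_cpt hsol.f₀_nonneg hR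

/-- At the initial time, `-V k ≥ -C g` for some constant `C`. -/
theorem exists_initial_quad : ∃ C ≥ 0, ∀ v : Fin 3 → ℝ,
    -C * (v ⬝ᵥ g t₀ *ᵥ v) ≤ -(Vol g t₀ * (v ⬝ᵥ k t₀ *ᵥ v)) := by
  have hV := hsol.Vol_pos (t := t₀) le_rfl
  have hT := trace_sq_nonneg (hsol.g_posdef t₀ le_rfl).inv.posSemidef (hsol.k_symm t₀ le_rfl)
  set T := ((g t₀)⁻¹ * k t₀ * (g t₀)⁻¹ * k t₀).trace with hTd
  refine ⟨Vol g t₀ * √T, by positivity, fun v => ?_⟩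
  have h := quad_sq_le (hsol.g_posdef t₀ le_rfl) (hsol.k_symm t₀ le_rfl) v
  rw [← hTd, ← Real.sq_sqrt hT, ← mul_pow] at h
  have h2 := (le_abs_self _).trans (abs_le_of_sq_le_sq h
    (mul_nonneg (Real.sqrt_nonneg _) (hsol.quad_g_nonneg le_rfl v)))
  nlinarith

variable {c : ℝ} (hc : 0 < c) (hgr : ∀ t ≥ t₀, c * sh t₀ t ≤ VolD g k t ∧ c * sh t₀ t ^ 2 ≤ Vol g t)

include hc hgr

/-- First bound on momenta: since `V⁻¹` is integrable in time, they stay bounded. -/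
theorem momenta_bounded : ∃ R ≥ 0, ∀ t ≥ t₀, ∀ p, f₀ p ≠ 0 → nsq (g t) p ≤ R := by
  obtain ⟨C, hC, hC0⟩ := hsol.exists_initial_quad
  obtain ⟨R₀, hR₀, hR⟩ := hsol.exists_initial_bound
  have hq : ∀ t ≥ t₀, ∀ v : Fin 3 → ℝ, -C * (v ⬝ᵥ g t *ᵥ v) ≤ -(Vol g t * (v ⬝ᵥ k t *ᵥ v)) :=
    fun t ht v => hsol.quad_ge_of_initial (μ := fun _ => -C) (μ' := fun _ => 0) (L := 0)
      (fun t _ => hasDerivWithinAt_const _ _ _)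
      (fun t ht => mul_nonneg (by positivity) (hsol.E_sub_tau_nonneg ht))
      (fun t ht => div_nonpos_of_nonpos_of_nonneg (by linarith) (hsol.Vol_pos ht).le) v (hC0 v) t ht
  refine ⟨R₀ * Real.exp (2 * C / c), by positivity, fun t ht p hp => ?_⟩
  have h := le_exp_of_deriv_le (ψ := fun t => -(2 * C / c) * (sh t₀ t)⁻¹)
    (ψ' := fun t => 2 * C / (c * sh t₀ t ^ 2))
    (fun t ht => hsol.hasDeriv_nsq ht p) (fun t ht => ?_) (fun t ht => ?_) t ht
  · refine h.trans ?_
    have h1 := hR p hp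
    have h2 : 0 ≤ 2 * C / c * (sh t₀ t)⁻¹ := mul_nonneg (by positivity) (inv_nonneg.2 (sh_pos ht).le)
    have h3 : -(2 * C / c) * (sh t₀ t)⁻¹ - -(2 * C / c) * (sh t₀ t₀)⁻¹ ≤ 2 * C / c := by
      rw [sh_self]; linarith
    gcongr
  · have := sh_pos ht
    refine (((hasDeriv_sh t₀ t _).fun_inv this.ne').const_mul _).congr_deriv ?_
    field_simp
  · refine (hsol.nsq_deriv_le ht (hq t ht) p).trans ?_
    refine mul_le_mul_of_nonneg_right ?_ (nsq_nonneg (hsol.g_posdef t ht) p)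
    have := sh_pos ht
    rw [show -(2 * -C / Vol g t) = 2 * C / Vol g t by ring]
    exact div_le_div_of_nonneg_left (by positivity) (by positivity) (hgr t ht).2

/-- Some power decay of the momenta: the lower bound `μ` of `-V g⁻¹k` grows linearly, while the
volume is at most quadratic. -/
theorem momenta_decay (hf₀ : f₀ ≠ 0) : ∃ α > (0 : ℝ), α ≤ 1 / 2 ∧ ∃ R ≥ 0, ∀ t ≥ t₀,
    ∀ p, f₀ p ≠ 0 → nsq (g t) p ≤ R * sh t₀ t ^ (-α) := by
  obtain ⟨C, hC, hC0⟩ := hsol.exists_initial_quad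
  obtain ⟨R₀, hR₀, hR⟩ := hsol.exists_initial_bound
  obtain ⟨R₁, hR₁, hRt⟩ := hsol.momenta_bounded hc hgr
  have hm := hsol.m_pos
  have hN : 0 < ∫ p, f₀ p := by
    obtain ⟨x, hx⟩ := Function.ne_iff.1 hf₀
    exact hsol.hf.integral_pos_of_hasCompactSupport_nonneg_nonzero hsol.f₀_cpt hsol.f₀_nonneg hx
  set N := ∫ p, f₀ p with hNd
  -- upper bounds for the volume
  set A := 12 * Real.pi * (√(m ^ 2 + R₁) * N) with hA
  have hA0 : 0 ≤ A := by positivity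
  have hV0 := hsol.Vol_pos (t := t₀) le_rfl
  have hW0 : 0 < VolD g k t₀ := by
    have := (hgr t₀ le_rfl).1; rw [sh_self] at this; linarith
  have hW : ∀ t ≥ t₀, VolD g k t ≤ (VolD g k t₀ + A) * sh t₀ t := by
    refine cmp_le (fun t ht => hsol.hasDeriv_VolD ht)
      (fun t _ => (hasDeriv_sh t₀ t _).const_mul _) (by rw [sh_self]; linarith) fun t ht => ?_
    have h1 := En_le (m := m) (hsol.g_posdef t ht) hsol.hf hsol.f₀_cpt hsol.f₀_nonneg (hRt t ht)
    have h2 := Tau_nonneg hsol.m_pos (hsol.g_posdef t ht) hsol.hf hsol.f₀_cpt hsol.f₀_nonneg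
    have h3 := mul_nonneg Real.pi_pos.le h2
    have h4 := mul_le_mul_of_nonneg_left h1 Real.pi_pos.le
    linarith
  set b := 4 * Real.pi * (m ^ 2 / √(m ^ 2 + R₁) * N) with hb
  have hb0 : 0 < b := by positivity
  set B := Vol g t₀ + (VolD g k t₀ + A) + 4 * b with hB
  have hB0 : 0 < B := by positivity
  have hV : ∀ t ≥ t₀, Vol g t ≤ B * sh t₀ t ^ 2 := by
    refine cmp_le (fun t ht => hsol.hasDeriv_Vol ht)
      (fun t _ => ((hasDeriv_sh t₀ t _).fun_pow 2).const_mul _)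
      (by rw [sh_self]; linarith) fun t ht => ?_
    refine (hW t ht).trans ?_
    push_cast
    have := sh_pos ht
    have h1 : VolD g k t₀ + A ≤ 2 * B := by linarith
    nlinarith [mul_le_mul_of_nonneg_right h1 this.le]
  -- linear growth of the smallest eigenvalue
  have hq : ∀ t ≥ t₀, ∀ v : Fin 3 → ℝ,
      (b * sh t₀ t - (b + C)) * (v ⬝ᵥ g t *ᵥ v) ≤ -(Vol g t * (v ⬝ᵥ k t *ᵥ v)) := by
    intro t ht v
    refine hsol.quad_ge_of_initial (μ := fun t => b * sh t₀ t - (b + C)) (μ' := fun _ => b)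
      (L := 2 * b / c)
      (fun t _ => (((hasDeriv_sh t₀ t _).const_mul b).sub_const _).congr_deriv (mul_one b))
      (fun t ht => ?_) (fun t ht => ?_) v ?_ t ht
    · exact mul_le_mul_of_nonneg_left (En_sub_Tau_ge hsol.m_pos (hsol.g_posdef t ht) hsol.hf
        hsol.f₀_cpt hsol.f₀_nonneg (hRt t ht)) (by positivity)
    · rw [div_le_div_iff₀ (hsol.Vol_pos ht) hc]
      have h1 := (hgr t ht).2
      have h2 := sh_ge ht
      have h3 : c * sh t₀ t ≤ Vol g t := by
        nlinarith [mul_nonneg (mul_nonneg hc.le (sh_pos ht).le) (sub_nonneg.2 h2)]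
      nlinarith [mul_le_mul_of_nonneg_left h3 hb0.le, mul_nonneg hC hc.le, mul_nonneg hb0.le hc.le]
    · simp only [sh_self]
      rw [show b * 1 - (b + C) = -C by ring]
      exact hC0 v
  set α := 2 * b / B with hα
  set β := 2 * (b + C) / c with hβ
  have hβ0 : 0 ≤ β := by positivity
  refine ⟨α, by positivity, ?_, R₀ * Real.exp β, by positivity, fun t ht p hp => ?_⟩
  · rw [hα, div_le_iff₀ hB0]; linarith
  have h := le_exp_of_deriv_le (ψ := fun t => -α * Real.log (sh t₀ t) + -β * (sh t₀ t)⁻¹)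
    (ψ' := fun t => -α / sh t₀ t + β / sh t₀ t ^ 2)
    (fun t ht => hsol.hasDeriv_nsq ht p) (fun t ht => ?_) (fun t ht => ?_) t ht
  · refine h.trans ?_
    have h1 := hR p hp
    have hs := sh_pos ht
    have h2 : 0 ≤ β * (sh t₀ t)⁻¹ := by positivity
    have h3 : -α * Real.log (sh t₀ t) + -β * (sh t₀ t)⁻¹
        - (-α * Real.log (sh t₀ t₀) + -β * (sh t₀ t₀)⁻¹) ≤ β + Real.log (sh t₀ t) * -α := by
      rw [sh_self, Real.log_one]; linarith
    rw [Real.rpow_def_of_pos hs (-α), mul_assoc, ← Real.exp_add]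
    gcongr
  · have := sh_pos ht
    refine ((((hasDeriv_sh t₀ t _).log this.ne').const_mul _).add
      (((hasDeriv_sh t₀ t _).fun_inv this.ne').const_mul _)).congr_deriv ?_
    field_simp
  · refine (hsol.nsq_deriv_le ht (hq t ht) p).trans ?_
    refine mul_le_mul_of_nonneg_right ?_ (nsq_nonneg (hsol.g_posdef t ht) p)
    have hs := sh_pos ht
    have hVt := hsol.Vol_pos ht
    have h1 : 2 * (b + C) / Vol g t ≤ 2 * (b + C) / (c * sh t₀ t ^ 2) :=
      div_le_div_of_nonneg_left (by positivity) (by positivity) (hgr t ht).2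
    have h2 : 2 * b * sh t₀ t / (B * sh t₀ t ^ 2) ≤ 2 * b * sh t₀ t / Vol g t :=
      div_le_div_of_nonneg_left (by positivity) hVt (hV t ht)
    have e1 : 2 * (b + C) / (c * sh t₀ t ^ 2) = β / sh t₀ t ^ 2 := by rw [hβ]; field_simp
    have e2 : 2 * b * sh t₀ t / (B * sh t₀ t ^ 2) = α / sh t₀ t := by rw [hα]; field_simp
    rw [e1] at h1
    rw [e2] at h2
    have e3 : -(2 * (b * sh t₀ t - (b + C)) / Vol g t)
        = 2 * (b + C) / Vol g t - 2 * b * sh t₀ t / Vol g t := by ring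
    rw [e3, neg_div]
    linarith

omit hc hgr in
/-- Decay `τ ≤ M u^{-α}` with `α < 1` makes the shear `√D = O(u^{1-α})`. -/
theorem shear_sublinear {α R : ℝ} (hα : 0 < α) (hα' : α ≤ 1 / 2) (hR0 : 0 ≤ R)
    (hR : ∀ t ≥ t₀, ∀ p, f₀ p ≠ 0 → nsq (g t) p ≤ R * sh t₀ t ^ (-α)) :
    ∃ Y > 0, ∀ t ≥ t₀, Dsh g k t ≤ (Y * sh t₀ t ^ (1 - α)) ^ 2 := by
  have hm := hsol.m_pos
  have hN : 0 ≤ ∫ p, f₀ p := integral_nonneg hsol.f₀_nonneg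
  set M := (∫ p, f₀ p) / m * R with hM
  have hM0 : 0 ≤ M := by positivity
  set Y := 16 * Real.pi * M + 1 + |Dsh g k t₀| with hY
  have hY0 : 0 < Y := by positivity
  choose! D' hD hD' using fun (t : ℝ) (ht : t₀ ≤ t) => hsol.exists_hasDeriv_Dsh ht
  refine ⟨Y, hY0, le_sq_of_deriv_le hD hD' (y' := fun t => Y * ((1 - α) * sh t₀ t ^ (-α)))
    (fun t ht => ?_) (fun t ht => ?_) (fun t ht => ?_) ?_⟩
  · refine ((hasDeriv_sh_rpow ht (1 - α) _).const_mul Y).congr_deriv ?_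
    rw [show 1 - α - 1 = -α by ring]
  · exact mul_pos hY0 (Real.rpow_pos_of_pos (sh_pos ht) _)
  · have h1 := hsol.tau_le ht (hR t ht)
    have h2 := Real.rpow_pos_of_pos (sh_pos ht) (-α)
    have h3 : 8 * Real.pi * M < Y * (1 - α) := by
      have : 0 ≤ |Dsh g k t₀| := abs_nonneg _
      nlinarith [mul_nonneg Real.pi_pos.le hM0]
    calc 8 * Real.pi * Tau m f₀ (g t)
        ≤ 8 * Real.pi * (M * sh t₀ t ^ (-α)) := by
          refine mul_le_mul_of_nonneg_left (h1.trans_eq ?_) (by positivity)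
          rw [hM]; ring
      _ = 8 * Real.pi * M * sh t₀ t ^ (-α) := by ring
      _ < Y * (1 - α) * sh t₀ t ^ (-α) := mul_lt_mul_of_pos_right h3 h2
      _ = _ := by ring
  · rw [sh_self, Real.one_rpow, mul_one]
    have h1 : |Dsh g k t₀| ≤ Y := by have := mul_nonneg Real.pi_pos.le hM0; linarith
    have h2 : 1 ≤ Y := by
      have := mul_nonneg Real.pi_pos.le hM0
      have := abs_nonneg (Dsh g k t₀); linarith
    have := le_abs_self (Dsh g k t₀)
    nlinarith

/-- Sharp decay of momenta: when the shear is `O(u^{1-α})`, the quantity `√D/V` is integrable,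
so every direction expands like `V^{1/3}` up to constants, and `V ≥ c u²`. -/
theorem momenta_sharp {α Y : ℝ} (hα : 0 < α) (hY : 0 < Y)
    (hD : ∀ t ≥ t₀, Dsh g k t ≤ (Y * sh t₀ t ^ (1 - α)) ^ 2) :
    ∃ R ≥ 0, ∀ t ≥ t₀, ∀ p, f₀ p ≠ 0 → nsq (g t) p ≤ R * sh t₀ t ^ (-(4 / 3 : ℝ)) := by
  obtain ⟨R₀, hR₀, hR⟩ := hsol.exists_initial_bound
  set δ := 2 * Y / (c * α) with hδ
  have hδ0 : 0 < δ := by positivity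
  set κ := δ + 2 / 3 * Real.log (Vol g t₀) - 2 / 3 * Real.log c with hκ
  refine ⟨R₀ * Real.exp κ, by positivity, fun t ht p hp => ?_⟩
  have h := le_exp_of_deriv_le
    (ψ := fun t => -(2 / 3) * Real.log (Vol g t) + -δ * sh t₀ t ^ (-α))
    (ψ' := fun t => -(2 / 3) * (VolD g k t / Vol g t) + -δ * (-α * sh t₀ t ^ (-α - 1)))
    (fun t ht => hsol.hasDeriv_nsq ht p) (fun t ht => ?_) (fun t ht => ?_) t ht
  · refine h.trans ?_
    have h1 := hR p hp
    have hs := sh_pos ht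
    have h2 : 0 ≤ δ * sh t₀ t ^ (-α) := mul_nonneg hδ0.le (Real.rpow_nonneg hs.le _)
    have h4 : Real.log c + 2 * Real.log (sh t₀ t) ≤ Real.log (Vol g t) := by
      rw [← Real.log_rpow hs, ← Real.log_mul hc.ne' (Real.rpow_pos_of_pos hs _).ne']
      refine Real.log_le_log (mul_pos hc (Real.rpow_pos_of_pos hs _)) ?_
      rw [Real.rpow_two]
      exact (hgr t ht).2
    have h3 : -(2 / 3) * Real.log (Vol g t) + -δ * sh t₀ t ^ (-α)
        - (-(2 / 3) * Real.log (Vol g t₀) + -δ * sh t₀ t₀ ^ (-α))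
        ≤ κ + Real.log (sh t₀ t) * -(4 / 3 : ℝ) := by
      rw [sh_self, Real.one_rpow]; linarith
    rw [Real.rpow_def_of_pos hs (-(4 / 3 : ℝ)), mul_assoc, ← Real.exp_add]
    gcongr
  · exact (((hsol.hasDeriv_Vol ht).log (hsol.Vol_pos ht).ne').const_mul _).add
      ((hasDeriv_sh_rpow ht (-α) _).const_mul _)
  · have hs := sh_pos ht
    have hVt := hsol.Vol_pos ht
    have hn := nsq_nonneg (hsol.g_posdef t ht) p
    set y := Y * sh t₀ t ^ (1 - α) with hy
    have hy0 : 0 ≤ y := mul_nonneg hY.le (Real.rpow_nonneg hs.le _)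
    have h1 := (le_abs_self _).trans (hsol.abs_shear_le ht hy0 (hD t ht) ((g t)⁻¹ *ᵥ p))
    have e1 : ((g t)⁻¹ *ᵥ p) ⬝ᵥ g t *ᵥ ((g t)⁻¹ *ᵥ p) = nsq (g t) p := by
      rw [mulVec_mulVec, Matrix.mul_nonsing_inv _ (hsol.isUnit_det ht), one_mulVec,
        dotProduct_comm, nsq]
    have e2 := shear_quad (g := g) (k := k) (t := t) ((g t)⁻¹ *ᵥ p)
    rw [e1] at h1 e2
    rw [e2]
    set x := ((g t)⁻¹ *ᵥ p) ⬝ᵥ shear (g t) (k t) *ᵥ ((g t)⁻¹ *ᵥ p)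
    have h2 : x ≤ y / Vol g t * nsq (g t) p := by
      rw [div_mul_eq_mul_div, le_div_iff₀ hVt]; linarith
    have h3 : y / Vol g t ≤ y / (c * sh t₀ t ^ 2) :=
      div_le_div_of_nonneg_left hy0 (by positivity) (hgr t ht).2
    have e3 : y / (c * sh t₀ t ^ 2) = δ / 2 * (α * sh t₀ t ^ (-α - 1)) := by
      have : sh t₀ t ^ (1 - α) = sh t₀ t ^ (-α - 1) * sh t₀ t ^ 2 := by
        rw [← Real.rpow_two, ← Real.rpow_add hs]; ring_nf
      rw [hy, hδ, this]; field_simp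
    have e4 : VolD g k t / Vol g t = -meanCurv (g t) (k t) := by
      rw [VolD]; field_simp
    rw [e3] at h3
    rw [e4]
    have h4 := mul_le_mul_of_nonneg_right h3 hn
    linarith

omit hc hgr in
/-- Since `u^{-4/3}` is integrable, the shear `√D` is bounded. -/
theorem shear_bounded {R : ℝ} (hR0 : 0 ≤ R)
    (hR : ∀ t ≥ t₀, ∀ p, f₀ p ≠ 0 → nsq (g t) p ≤ R * sh t₀ t ^ (-(4 / 3 : ℝ))) :
    ∃ Y > 0, ∀ t ≥ t₀, Dsh g k t ≤ Y ^ 2 := by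
  have hm := hsol.m_pos
  have hN : 0 ≤ ∫ p, f₀ p := integral_nonneg hsol.f₀_nonneg
  set M := (∫ p, f₀ p) / m * R with hM
  have hM0 : 0 ≤ M := by positivity
  set Z := 24 * Real.pi * M + 1 with hZ
  have hZ0 : 0 < Z := by positivity
  set Y := Z + 1 + |Dsh g k t₀| with hY
  have hY0 : 0 < Y := by positivity
  have hle : ∀ t ≥ t₀, sh t₀ t ^ (-(1 / 3 : ℝ)) ≤ 1 := fun t ht =>
    Real.rpow_le_one_of_one_le_of_nonpos (sh_ge ht) (by norm_num)
  have hpos : ∀ t ≥ t₀, 0 < Y - Z * sh t₀ t ^ (-(1 / 3 : ℝ)) := fun t ht => by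
    have := mul_le_mul_of_nonneg_left (hle t ht) hZ0.le
    have := abs_nonneg (Dsh g k t₀)
    linarith
  choose! D' hD hD' using fun (t : ℝ) (ht : t₀ ≤ t) => hsol.exists_hasDeriv_Dsh ht
  have key := le_sq_of_deriv_le hD hD' (y := fun t => Y - Z * sh t₀ t ^ (-(1 / 3 : ℝ)))
    (y' := fun t => Z / 3 * sh t₀ t ^ (-(4 / 3 : ℝ)))
    (fun t ht => ?_) hpos (fun t ht => ?_) ?_
  · refine ⟨Y, hY0, fun t ht => (key t ht).trans ?_⟩
    have h1 := hpos t ht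
    have h2 := mul_nonneg hZ0.le (Real.rpow_nonneg (sh_pos ht).le (-(1 / 3 : ℝ)))
    exact pow_le_pow_left₀ h1.le (by linarith) 2
  · refine (((hasDeriv_sh_rpow ht (-(1 / 3 : ℝ)) _).const_mul Z).const_sub Y).congr_deriv ?_
    rw [show (-(1 / 3 : ℝ)) - 1 = -(4 / 3) by norm_num]
    ring
  · have h1 := hsol.tau_le ht (hR t ht)
    have h2 := Real.rpow_pos_of_pos (sh_pos ht) (-(4 / 3 : ℝ))
    calc 8 * Real.pi * Tau m f₀ (g t)
        ≤ 8 * Real.pi * (M * sh t₀ t ^ (-(4 / 3 : ℝ))) := by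
          refine mul_le_mul_of_nonneg_left (h1.trans_eq ?_) (by positivity)
          rw [hM]; ring
      _ = 8 * Real.pi * M * sh t₀ t ^ (-(4 / 3 : ℝ)) := by ring
      _ < Z / 3 * sh t₀ t ^ (-(4 / 3 : ℝ)) := mul_lt_mul_of_pos_right (by linarith) h2
  · rw [sh_self, Real.one_rpow, mul_one]
    have h1 := le_abs_self (Dsh g k t₀)
    have h2 := abs_nonneg (Dsh g k t₀)
    rw [hY]
    nlinarith

/-- Eigenvalues of `g⁻¹k` differ from `H/3` by at most `√D / V`, and `W = -V H ≥ c u`. -/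
theorem eigenvalue_bound {Y : ℝ} (hY : 0 < Y) (hD : ∀ t ≥ t₀, Dsh g k t ≤ Y ^ 2)
    {t : ℝ} (ht : t₀ ≤ t) {lam : ℝ} {v : Fin 3 → ℝ} (hv : v ≠ 0)
    (he : ((g t)⁻¹ * k t).mulVec v = lam • v) :
    |lam / meanCurv (g t) (k t) - 1 / 3| ≤ Y / (c * sh t₀ t) := by
  have hg := hsol.g_posdef t ht
  have hVt := hsol.Vol_pos ht
  have hpos : 0 < v ⬝ᵥ g t *ᵥ v := by simpa using hg.dotProduct_mulVec_pos hv
  have hk : k t *ᵥ v = lam • g t *ᵥ v := by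
    rw [← mulVec_smul, ← he, mulVec_mulVec, ← Matrix.mul_assoc,
      Matrix.mul_nonsing_inv _ (hsol.isUnit_det ht), Matrix.one_mul]
  have h1 := hsol.abs_shear_le ht hY.le (hD t ht) v
  have e2 := shear_quad (g := g) (k := k) (t := t) v
  rw [hk, dotProduct_smul, smul_eq_mul] at e2
  set H := meanCurv (g t) (k t) with hH
  have e3 : v ⬝ᵥ shear (g t) (k t) *ᵥ v = (lam - H / 3) * (v ⬝ᵥ g t *ᵥ v) := by linarith
  rw [e3, ← mul_assoc, abs_mul, abs_of_pos hpos] at h1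
  have h2 : |Vol g t * (lam - H / 3)| ≤ Y := le_of_mul_le_mul_right h1 hpos
  have hW := (hgr t ht).1
  have hs := sh_pos ht
  have hcs : 0 < c * sh t₀ t := by positivity
  have hWp : 0 < VolD g k t := hcs.trans_le hW
  have hWd : VolD g k t = -(Vol g t * H) := rfl
  have hH0 : H ≠ 0 := by
    intro h0; rw [hWd, h0] at hWp; simp at hWp
  have e4 : lam / H - 1 / 3 = -(Vol g t * (lam - H / 3)) / VolD g k t := by
    rw [hWd]; field_simp
  rw [e4, abs_div, abs_neg, abs_of_pos hWp]
  exact div_le_div₀ hY.le h2 hcs hW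

end BianchiIVlasov

/-- For arbitrary expanding initial data, the generalized Kasner exponents converge to `1/3` at
rate `t⁻¹`. -/
theorem kasner_decay (t₀ m : ℝ) (g k : ℝ → M3)
    (f₀ : (Fin 3 → ℝ) → ℝ) (hsol : BianchiIVlasov t₀ m g k f₀)
    (hexp : meanCurv (g t₀) (k t₀) < 0) (hf₀ : f₀ ≠ 0) :
    ∃ C > (0 : ℝ), ∃ T ≥ t₀, ∀ t ≥ T, ∀ lam : ℝ,
      (∃ v : Fin 3 → ℝ, v ≠ 0 ∧ ((g t)⁻¹ * k t).mulVec v = lam • v) →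
        |lam / meanCurv (g t) (k t) - 1 / 3| ≤ C * t⁻¹ := by
  obtain ⟨c, hc, hgr⟩ := hsol.growth_lower hexp hf₀
  obtain ⟨α, hα, hα', R, hR0, hR⟩ := hsol.momenta_decay hc hgr hf₀
  obtain ⟨Y, hY, hD⟩ := hsol.shear_sublinear hα hα' hR0 hR
  obtain ⟨R', hR0', hR'⟩ := hsol.momenta_sharp hc hgr hα hY hD
  obtain ⟨Z, hZ, hDZ⟩ := hsol.shear_bounded hR0' hR'
  -- beyond `T` one has `t > 0` and `1 + t - t₀ ≥ t / 2`
  refine ⟨2 * Z / c, by positivity, max t₀ (max 1 (2 * t₀)), le_max_left _ _, ?_⟩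
  rintro t ht lam ⟨v, hv, he⟩
  have h1 : t₀ ≤ t := (le_max_left _ _).trans ht
  have h2 : 1 ≤ t := ((le_max_left _ _).trans (le_max_right _ _)).trans ht
  have h3 : 2 * t₀ ≤ t := ((le_max_right _ _).trans (le_max_right _ _)).trans ht
  have h4 : t / 2 ≤ sh t₀ t := by unfold sh; linarith
  refine (hsol.eigenvalue_bound hc hgr hZ hDZ h1 hv he).trans ?_
  calc Z / (c * sh t₀ t) ≤ Z / (c * (t / 2)) := by gcongr
    _ = 2 * Z / c * t⁻¹ := by field_simp

/-- **Convergence of the generalized Kasner exponents.**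
For a smooth expanding solution of the Bianchi I Einstein–Vlasov system with `f₀` not
identically zero, if the initial anisotropy `F(t₀)` and the initial momentum supremum
`P(t₀)` are sufficiently small, then every generalized Kasner exponent, i.e. every
eigenvalue of `g(t)⁻¹ k(t)` divided by `H(t)`, converges to `1/3` at rate `t⁻¹`. -/
theorem kasner_exponents_late_time (t₀ m : ℝ) (g k : ℝ → Matrix (Fin 3) (Fin 3) ℝ)
    (f₀ : (Fin 3 → ℝ) → ℝ) (hsol : BianchiIVlasov t₀ m g k f₀)
    (hexp : meanCurv (g t₀) (k t₀) < 0) (hf₀ : f₀ ≠ 0) :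
    ∃ ε₀ > (0 : ℝ), ∃ C > (0 : ℝ),
      anisotropy (g t₀) (k t₀) ≤ ε₀ → momentumSup f₀ (g t₀) ≤ ε₀ →
        ∃ T ≥ t₀, ∀ t ≥ T, ∀ lam : ℝ,
          (∃ v : Fin 3 → ℝ, v ≠ 0 ∧ ((g t)⁻¹ * k t).mulVec v = lam • v) →
            |lam / meanCurv (g t) (k t) - 1 / 3| ≤ C * t⁻¹ := by
  obtain ⟨C, hC, T, hT, h⟩ := kasner_decay t₀ m g k f₀ hsol hexp hf₀
  exact ⟨1, one_pos, C, hC, fun _ _ => ⟨T, hT, h⟩⟩
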